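/- arXiv:2603.18878 — 2 statements merged into one kernel-verified Lean document; each statement's English description precedes it below -/
import Mathlib

section
/- Let (V, parent) be an unrooted leafless directed tree, let λ = (λ_v)_{v∈V} be nonzero real or complex weights, and suppose the weighted backward shift B_λ defines a bounded linear operator on X = c0(V). Then B_λ is chain recurrent if and only if for every v ∈ V: (i) ∑_{n=1}^∞ ∑_{u ∈ Child^n(v)} |λ(v→u)| = ∞, and (ii) the sequence n ↦ ∑_{j=0}^{n−1} ∑_{u ∈ Child^j(parent^n(v))} |λ(parent^n(v)→u)| / |λ(parent^n(v)→v)| tends to ∞ as n → ∞. -/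
/-!
For a linear operator `T`, there is a `δ`-chain of length `n` from `x` to `y` exactly when
`y - T^n x` lies in `∑_{l < n} T^l (B_δ)`, where `B_δ` is the open `δ`-ball (`PerturbSum`,
`perturbSum_of_chain`, `exists_chain_of_perturbSum`). For the backward shift on `c₀(V)`, the
functional `f ↦ (T^l f)(v)` has `ℓ¹`-norm `∑_{u ∈ Child^l(v)} |λ(v → u)|`. Hence with
`A n v = ∑_{l < n} ∑_{u ∈ Child^l(v)} |λ(v → u)|` (`cumWeight`) the values at `v` of elements of
`∑_{l < n} T^l (B_δ)` are bounded by `δ * A n v` (`enorm_perturbSum_apply_le`), and conversely `c`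
times the unit vector at `v` belongs to that set as soon as `|c| < δ * A n v` (`perturbSum_spike`).

Necessity. Take a `δ`-chain of length `n ≥ 1` from the unit vector `1_v` to itself. As `T^n 1_v` is
`λ(parent^n v → v)` times the unit vector at `parent^n v ≠ v`, evaluating at `v` gives
`1 ≤ δ * A n v`, and evaluating at `parent^n v` gives
`|λ(parent^n v → v)| ≤ δ * A n (parent^n v)`. Letting `δ → 0` yields (i), and it shows that the
sequence in (ii) is unbounded; being monotone (`monotone_cumWeight_div`), it tends to `∞`.

Sufficiency. Conditions (i) and (ii) say that, for `x` a multiple of a unit vector and `m` large,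
both `x` and `T^m x` lie in `∑_{l < m} T^l (B_δ)`, whence `x` returns to itself along a `δ`-chain of
length `m`. The points that return in this way for every large `m` (`EventuallyReturns`) form a
closed set stable under addition, and finitely supported functions are dense in `c₀(V)`.
-/

open Filter Function
open scoped ENNReal NNReal

noncomputable section

/-- A `δ`-chain for `T` from `x` to `y`. -/
def HasDeltaChain {X : Type*} [PseudoMetricSpace X] (T : X → X) (δ : ℝ) (x y : X) : Prop :=
  ∃ n : ℕ, 1 ≤ n ∧ ∃ f : ℕ → X, f 0 = x ∧ f n = y ∧
    ∀ l : ℕ, 1 ≤ l → l ≤ n → dist (T (f (l - 1))) (f l) < δ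

/-- `T` is chain recurrent if for every `x` and every `δ > 0` there is a `δ`-chain for
`T` from `x` to itself. -/
def ChainRecurrent {X : Type*} [PseudoMetricSpace X] (T : X → X) : Prop :=
  ∀ x : X, ∀ δ : ℝ, 0 < δ → HasDeltaChain T δ x x

/-- For `u ∈ Child^n(v)`, `pathWeight parent w n u = λ(v → u)`, the product of the
weights along the path from `v = parent^[n] u` to `u`; in particular `λ(v → v) = 1`. -/
def pathWeight {V 𝕜 : Type*} [RCLike 𝕜] (parent : V → V) (w : V → 𝕜) (n : ℕ) (u : V) : 𝕜 :=
  ∏ i ∈ Finset.range n, w (parent^[i] u)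

/-! ### Chains of linear operators and sums of perturbations -/

section Chains

variable {𝕜 E : Type*} [RCLike 𝕜] [NormedAddCommGroup E] [NormedSpace 𝕜 E]

/-- `y` is the accumulated effect after `n` steps of errors of size `< δ`, that is
`y ∈ ∑_{l < n} T^l (B_δ)` with `B_δ` the open ball. The entries `e l` with `l ≥ n` play no role. -/
def PerturbSum (T : E →L[𝕜] E) (δ : ℝ) (n : ℕ) (y : E) : Prop :=
  ∃ e : ℕ → E, (∀ l, ‖e l‖ < δ) ∧ y = ∑ l ∈ Finset.range n, (T ^ l) (e l)

theorem PerturbSum.add {T : E →L[𝕜] E} {δ₁ δ₂ : ℝ} {n : ℕ} {y z : E}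
    (hy : PerturbSum T δ₁ n y) (hz : PerturbSum T δ₂ n z) :
    PerturbSum T (δ₁ + δ₂) n (y + z) := by
  obtain ⟨e, he, rfl⟩ := hy
  obtain ⟨g, hg, rfl⟩ := hz
  refine ⟨fun l => e l + g l, fun l => (norm_add_le _ _).trans_lt (add_lt_add (he l) (hg l)), ?_⟩
  simp [Finset.sum_add_distrib]

theorem PerturbSum.neg {T : E →L[𝕜] E} {δ : ℝ} {n : ℕ} {y : E}
    (hy : PerturbSum T δ n y) : PerturbSum T δ n (-y) := by
  obtain ⟨e, he, rfl⟩ := hy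
  exact ⟨fun l => - e l, fun l => by simpa using he l, by simp⟩

theorem perturbSum_pow {T : E →L[𝕜] E} {δ : ℝ} {n l : ℕ} (hl : l < n) {z : E} (hz : ‖z‖ < δ) :
    PerturbSum T δ n ((T ^ l) z) := by
  classical
  refine ⟨fun k => if k = l then z else 0, fun k => ?_, ?_⟩
  · dsimp only
    split_ifs
    · exact hz
    · simpa using (norm_nonneg z).trans_lt hz
  · rw [Finset.sum_eq_single l]
    · simp
    · intro b _ hb
      simp [hb]
    · intro h
      exact absurd (Finset.mem_range.2 hl) h

/-- A `δ`-chain of length `n` from `x` to `y` is the orbit of `x` with a perturbation added at each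
step, so `y` differs from `T^n x` by the accumulated errors. -/
theorem perturbSum_of_chain (T : E →L[𝕜] E) {δ : ℝ} (hδ : 0 < δ) (f : ℕ → E) (n : ℕ)
    (h : ∀ l : ℕ, 1 ≤ l → l ≤ n → dist (T (f (l - 1))) (f l) < δ) :
    PerturbSum T δ n (f n - (T ^ n) (f 0)) := by
  induction n with
  | zero => exact ⟨fun _ => 0, fun _ => by simpa using hδ, by simp⟩
  | succ n ih =>
    obtain ⟨e, he, hs⟩ := ih fun l h1 h2 => h l h1 (by omega)
    refine ⟨fun l => Nat.casesOn l (f (n + 1) - T (f n)) e, ?_, ?_⟩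
    · rintro (_ | l)
      · have := h (n + 1) (by omega) le_rfl
        rw [dist_comm, dist_eq_norm] at this
        simpa using this
      · exact he l
    · rw [Finset.sum_range_succ']
      have h2 : ∑ k ∈ Finset.range n, (T ^ (k + 1)) (e k) = T (f n - (T ^ n) (f 0)) := by
        rw [hs, map_sum]
        simp [pow_succ']
      simp only [h2]
      simp [pow_succ']

/-- Conversely, any accumulated error is realised by a chain. -/
theorem exists_chain_of_perturbSum (T : E →L[𝕜] E) {δ : ℝ} (x y : E) (n : ℕ)
    (h : PerturbSum T δ n (y - (T ^ n) x)) :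
    ∃ f : ℕ → E, f 0 = x ∧ f n = y ∧
      ∀ l : ℕ, 1 ≤ l → l ≤ n → dist (T (f (l - 1))) (f l) < δ := by
  induction n generalizing y with
  | zero =>
    obtain ⟨e, -, hs⟩ := h
    refine ⟨fun _ => x, rfl, ?_, fun l _ _ => by omega⟩
    simp only [pow_zero, one_apply_eq_self, Finset.range_zero, Finset.sum_empty] at hs
    exact (sub_eq_zero.1 hs).symm
  | succ n ih =>
    obtain ⟨e, he, hs⟩ := h
    rw [Finset.sum_range_succ'] at hs
    obtain ⟨f, h0, hn, hf⟩ := ih ((T ^ n) x + ∑ l ∈ Finset.range n, (T ^ l) (e (l + 1)))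
      ⟨fun l => e (l + 1), fun l => he _, by simp⟩
    refine ⟨fun l => if l ≤ n then f l else y, by simpa using h0, by simp, fun l h1 h2 => ?_⟩
    rcases Nat.lt_or_ge n l with hl | hl
    · obtain rfl : l = n + 1 := by omega
      have hy : y = T (f n) + e 0 := by
        rw [sub_eq_iff_eq_add] at hs
        rw [hs, hn, map_add, map_sum]
        simp only [pow_succ', mul_apply_eq_comp, pow_zero, one_apply_eq_self]
        abel
      simp only [Nat.add_sub_cancel, le_refl, if_true, Nat.not_succ_le_self, if_false]
      rw [hy, dist_eq_norm]
      simpa using he 0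
    · simp only [hl, if_true, show l - 1 ≤ n by omega]
      exact hf l h1 hl

/-- For all `δ > 0` and all large `m`, the point `x` returns to itself along a `δ`-chain of length
`m`. Asking for every large length, rather than one, makes the property additive in `x`. -/
def EventuallyReturns (T : E →L[𝕜] E) (x : E) : Prop :=
  ∀ δ : ℝ, 0 < δ → ∀ᶠ m : ℕ in atTop, PerturbSum T δ m (x - (T ^ m) x)

theorem EventuallyReturns.add {T : E →L[𝕜] E} {x y : E}
    (hx : EventuallyReturns T x) (hy : EventuallyReturns T y) : EventuallyReturns T (x + y) := by
  intro δ hδ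
  filter_upwards [hx (δ / 2) (by positivity), hy (δ / 2) (by positivity)] with m h1 h2
  have := h1.add h2
  rw [add_halves] at this
  convert this using 1
  rw [map_add]
  abel

theorem eventuallyReturns_zero (T : E →L[𝕜] E) : EventuallyReturns T 0 := by
  intro δ hδ
  exact Eventually.of_forall fun m => ⟨fun _ => 0, fun _ => by simpa using hδ, by simp⟩

theorem eventuallyReturns_sum {ι : Type*} {T : E →L[𝕜] E} (s : Finset ι) (x : ι → E)
    (h : ∀ i ∈ s, EventuallyReturns T (x i)) : EventuallyReturns T (∑ i ∈ s, x i) :=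
  Finset.sum_induction x (EventuallyReturns T) (fun _ _ => EventuallyReturns.add)
    (eventuallyReturns_zero T) h

/-- The set of eventually returning points is closed: replacing `x` by a nearby `y` costs one
error at the first step and one at the last. -/
theorem eventuallyReturns_of_approx {T : E →L[𝕜] E} {x : E}
    (h : ∀ ε : ℝ, 0 < ε → ∃ y, ‖x - y‖ < ε ∧ EventuallyReturns T y) : EventuallyReturns T x := by
  intro δ hδ
  have hM : 0 < ‖T‖ + 1 := by positivity
  obtain ⟨y, hxy, hy⟩ := h (δ / 3 / (‖T‖ + 1)) (by positivity)
  have hprod : (‖T‖ + 1) * ‖x - y‖ < δ / 3 := by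
    rwa [lt_div_iff₀' hM] at hxy
  have h1 : ‖x - y‖ < δ / 3 := by
    nlinarith [norm_nonneg T, norm_nonneg (x - y), mul_nonneg (norm_nonneg T) (norm_nonneg (x - y))]
  have h2 : ‖T (x - y)‖ < δ / 3 := by
    nlinarith [T.le_opNorm (x - y), norm_nonneg (x - y)]
  filter_upwards [hy (δ / 3) (by positivity), eventually_ge_atTop 1] with m hm hm1
  obtain ⟨k, rfl⟩ : ∃ k, m = k + 1 := ⟨m - 1, by omega⟩
  have := (hm.add (perturbSum_pow (T := T) (Nat.succ_pos k) h1)).add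
    (perturbSum_pow (T := T) (Nat.lt_succ_self k) h2).neg
  convert this using 1
  · ring
  · simp only [pow_succ, mul_apply_eq_comp, pow_zero, one_apply_eq_self, map_sub]
    abel

theorem chainRecurrent_of_eventuallyReturns {T : E →L[𝕜] E} (h : ∀ x, EventuallyReturns T x) :
    ChainRecurrent (fun f => T f) := by
  intro x δ hδ
  obtain ⟨m, hm, hm1⟩ := ((h x δ hδ).and (eventually_ge_atTop 1)).exists
  obtain ⟨f, hf⟩ := exists_chain_of_perturbSum T x x m hm
  exact ⟨m, hm1, f, hf⟩

end Chains

/-! ### Weights of generations -/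

section Weights

variable {V 𝕜 : Type*} [RCLike 𝕜]

/-- `∑_{u ∈ Child^j(v)} |λ(v → u)|`, the total weight of the `j`-th generation below `v`. -/
def genWeight (parent : V → V) (w : V → 𝕜) (j : ℕ) (v : V) : ℝ≥0∞ :=
  ∑' u : {u : V // parent^[j] u = v}, ‖pathWeight parent w j (u : V)‖ₑ

/-- The total weight of the generations `0, …, n - 1` below `v`. -/
def cumWeight (parent : V → V) (w : V → 𝕜) (n : ℕ) (v : V) : ℝ≥0∞ :=
  ∑ j ∈ Finset.range n, genWeight parent w j v

theorem pathWeight_succ (parent : V → V) (w : V → 𝕜) (n : ℕ) (u : V) :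
    pathWeight parent w (n + 1) u = pathWeight parent w n u * w (parent^[n] u) :=
  Finset.prod_range_succ _ _

theorem pathWeight_ne_zero (parent : V → V) {w : V → 𝕜} (hw : ∀ v, w v ≠ 0) (n : ℕ) (u : V) :
    pathWeight parent w n u ≠ 0 :=
  Finset.prod_ne_zero_iff.2 fun _ _ => hw _

theorem genWeight_zero (parent : V → V) (w : V → 𝕜) (v : V) : genWeight parent w 0 v = 1 := by
  unfold genWeight
  rw [tsum_eq_single (⟨v, rfl⟩ : {u : V // parent^[0] u = v})]
  · simp [pathWeight]
  · rintro ⟨u, hu⟩ h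
    exact absurd (Subtype.ext hu) h

/-- The `(l+1)`-st generation below `v` splits into the `l`-th generations below the children
of `v`. -/
theorem genWeight_succ (parent : V → V) (w : V → 𝕜) (l : ℕ) (v : V) :
    genWeight parent w (l + 1) v =
      ∑' c : {c : V // parent c = v}, ‖w c‖ₑ * genWeight parent w l c := by
  unfold genWeight
  simp_rw [← ENNReal.tsum_mul_left]
  rw [← ENNReal.tsum_sigma' (f := fun p : (Σ c : {c : V // parent c = v},
    {u : V // parent^[l] u = c}) => ‖w p.1‖ₑ * ‖pathWeight parent w l (p.2 : V)‖ₑ)]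
  let φ : {u : V // parent^[l + 1] u = v} ≃
      (Σ c : {c : V // parent c = v}, {u : V // parent^[l] u = c}) :=
    { toFun := fun u => ⟨⟨parent^[l] u, (iterate_succ_apply' parent l u).symm.trans u.2⟩, ⟨u, rfl⟩⟩
      invFun := fun p => ⟨p.2, by rw [iterate_succ_apply', p.2.2, p.1.2]⟩
      left_inv := fun u => rfl
      right_inv := by
        rintro ⟨⟨c, hc⟩, ⟨u, hu⟩⟩
        obtain rfl : parent^[l] u = c := hu
        rfl }
  rw [← φ.tsum_eq]
  refine tsum_congr fun u => ?_
  rw [pathWeight_succ, enorm_mul, mul_comm]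
  rfl

theorem cumWeight_mono (parent : V → V) (w : V → 𝕜) (v : V) :
    Monotone fun n => cumWeight parent w n v := fun _ _ h =>
  Finset.sum_le_sum_of_subset (Finset.range_mono h)

theorem cumWeight_succ_ge (parent : V → V) (w : V → 𝕜) (n : ℕ) (c : V) :
    cumWeight parent w n c * ‖w c‖ₑ ≤ cumWeight parent w (n + 1) (parent c) := by
  unfold cumWeight
  rw [Finset.sum_range_succ', Finset.sum_mul]
  refine le_add_right (Finset.sum_le_sum fun j _ => ?_)
  rw [genWeight_succ, mul_comm]
  exact ENNReal.le_tsum (f := fun d : {d : V // parent d = parent c} =>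
    ‖w d‖ₑ * genWeight parent w j d) ⟨c, rfl⟩

/-- The quantity in condition (ii) is nondecreasing: the generations below `parent^n v` also lie
below `parent^{n+1} v`, and the common edge weight cancels. -/
theorem monotone_cumWeight_div (parent : V → V) {w : V → 𝕜} (hw : ∀ v, w v ≠ 0) (v : V) :
    Monotone fun n => cumWeight parent w n (parent^[n] v) / ‖pathWeight parent w n v‖ₑ := by
  refine monotone_nat_of_le_succ fun n => ?_
  rw [pathWeight_succ, enorm_mul,
    ← ENNReal.mul_div_mul_right _ _ (enorm_ne_zero.2 (hw (parent^[n] v))) enorm_ne_top,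
    iterate_succ_apply']
  exact ENNReal.div_le_div_right (cumWeight_succ_ge parent w n _) _

/-- If `a < cumWeight`, then already finitely many vertices carry a weight exceeding `a`. -/
theorem exists_finset_of_lt_cumWeight (parent : V → V) (w : V → 𝕜) (n : ℕ) (v : V) (a : ℝ)
    (h : ENNReal.ofReal a < cumWeight parent w n v) :
    ∃ F : Finset V, a < ∑ l ∈ Finset.range n, ∑ u ∈ F,
      {u | parent^[l] u = v}.indicator (fun u => ‖pathWeight parent w l u‖) u := by
  have h1 : cumWeight parent w n v = ∑' u : V, ∑ l ∈ Finset.range n,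
      {u | parent^[l] u = v}.indicator (fun u => ‖pathWeight parent w l u‖ₑ) u := by
    rw [Summable.tsum_finsetSum fun _ _ => ENNReal.summable]
    refine Finset.sum_congr rfl fun l _ => ?_
    exact tsum_subtype {u | parent^[l] u = v} (fun u => ‖pathWeight parent w l u‖ₑ)
  rw [h1, ENNReal.tsum_eq_iSup_sum, lt_iSup_iff] at h
  obtain ⟨F, hF⟩ := h
  refine ⟨F, ?_⟩
  rw [Finset.sum_comm] at hF
  have h2 : ∀ l u, {u | parent^[l] u = v}.indicator (fun u => ‖pathWeight parent w l u‖ₑ) u =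
      ENNReal.ofReal
        ({u | parent^[l] u = v}.indicator (fun u => ‖pathWeight parent w l u‖) u) := by
    intro l u
    by_cases hu : parent^[l] u = v <;> simp [Set.indicator, hu]
  have h3 : ∀ l u, 0 ≤ {u | parent^[l] u = v}.indicator (fun u => ‖pathWeight parent w l u‖) u :=
    fun l u => Set.indicator_nonneg (fun _ _ => norm_nonneg _) _
  simp_rw [h2] at hF
  simp_rw [← ENNReal.ofReal_sum_of_nonneg (fun u _ => h3 _ u)] at hF
  rw [← ENNReal.ofReal_sum_of_nonneg (fun l _ => Finset.sum_nonneg fun u _ => h3 l u)] at hF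
  exact (ENNReal.ofReal_lt_ofReal_iff'.1 hF).1

end Weights

/-! ### The backward shift -/

section C0

variable {V : Type*} [TopologicalSpace V] {𝕜 : Type*} [RCLike 𝕜]

theorem c0_sum_apply {ι : Type*} (s : Finset ι) (f : ι → ZeroAtInftyContinuousMap V 𝕜) (v : V) :
    (∑ i ∈ s, f i) v = ∑ i ∈ s, f i v :=
  map_sum (⟨⟨fun g => g v, rfl⟩, fun _ _ => rfl⟩ : ZeroAtInftyContinuousMap V 𝕜 →+ 𝕜) f s

theorem norm_le_of_forall {f : ZeroAtInftyContinuousMap V 𝕜} {C : ℝ} (hC : 0 ≤ C)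
    (h : ∀ v, ‖f v‖ ≤ C) : ‖f‖ ≤ C := by
  rw [← ZeroAtInftyContinuousMap.norm_toBCF_eq_norm, BoundedContinuousFunction.norm_le hC]
  exact h

theorem norm_apply_le (f : ZeroAtInftyContinuousMap V 𝕜) (v : V) : ‖f v‖ ≤ ‖f‖ := by
  rw [← ZeroAtInftyContinuousMap.norm_toBCF_eq_norm]
  exact f.toBCF.norm_coe_le_norm v

end C0

section Shift

variable {V : Type*} [TopologicalSpace V] [DiscreteTopology V] {𝕜 : Type*} [RCLike 𝕜]

open Classical in
/-- The element of `c₀(V)` with value `c` at `v` and `0` elsewhere. -/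
def spike (v : V) (c : 𝕜) : ZeroAtInftyContinuousMap V 𝕜 where
  toFun := Pi.single v c
  continuous_toFun := continuous_of_discreteTopology
  zero_at_infty' := by
    rw [cocompact_eq_cofinite]
    refine tendsto_nhds_of_eventually_eq ?_
    rw [eventually_cofinite]
    refine (Set.finite_singleton v).subset fun u hu => ?_
    by_contra h
    exact hu (Pi.single_eq_of_ne (M := fun _ => 𝕜) h c)

theorem spike_same (v : V) (c : 𝕜) : spike v c v = c := by
  classical
  exact Pi.single_eq_same (M := fun _ => 𝕜) v c

theorem spike_of_ne {u v : V} (h : u ≠ v) (c : 𝕜) : spike v c u = 0 := by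
  classical
  exact Pi.single_eq_of_ne (M := fun _ => 𝕜) h c

theorem spike_zero (v : V) : spike v (0 : 𝕜) = 0 := by
  ext u
  by_cases h : u = v
  · subst h; simp [spike_same]
  · simp [spike_of_ne h]

theorem spike_add (v : V) (c d : 𝕜) : spike v (c + d) = spike v c + spike v d := by
  ext u
  by_cases h : u = v
  · subst h; simp [spike_same]
  · simp [spike_of_ne h]

theorem spike_sum {ι : Type*} (s : Finset ι) (v : V) (c : ι → 𝕜) :
    spike v (∑ i ∈ s, c i) = ∑ i ∈ s, spike v (c i) :=
  map_sum (⟨⟨spike v, spike_zero v⟩, spike_add v⟩ : 𝕜 →+ ZeroAtInftyContinuousMap V 𝕜) c s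

open Classical in
theorem sum_spike_apply (F : Finset V) (a : V → 𝕜) (x : V) :
    (∑ u ∈ F, spike u (a u)) x = if x ∈ F then a x else 0 := by
  rw [c0_sum_apply, ← Finset.sum_pi_single x a F]
  rfl

/-- Finitely supported functions are dense in `c₀(V)`. -/
theorem exists_sum_spike_near (f : ZeroAtInftyContinuousMap V 𝕜) {ε : ℝ} (hε : 0 < ε) :
    ∃ F : Finset V, ‖f - ∑ u ∈ F, spike u (f u)‖ < ε := by
  classical
  have h : ∀ᶠ v in cofinite, ‖f v‖ < ε / 2 := by
    have := f.zero_at_infty'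
    rw [cocompact_eq_cofinite] at this
    have h2 := this.norm.eventually (gt_mem_nhds
      (show ‖(0 : 𝕜)‖ < ε / 2 by rw [norm_zero]; exact half_pos hε))
    exact h2
  rw [eventually_cofinite] at h
  refine ⟨h.toFinset, (norm_le_of_forall (half_pos hε).le fun v => ?_).trans_lt (half_lt_self hε)⟩
  rw [ZeroAtInftyContinuousMap.sub_apply, sum_spike_apply]
  split_ifs with hv
  · simpa using (half_pos hε).le
  · rw [sub_zero]
    by_contra hc
    exact hv (by simpa using (not_le.1 hc).le)

variable {parent : V → V} {w : V → 𝕜}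
  {T : ZeroAtInftyContinuousMap V 𝕜 →L[𝕜] ZeroAtInftyContinuousMap V 𝕜}

theorem shift_spike (hT : ∀ (f : ZeroAtInftyContinuousMap V 𝕜) (v : V),
      T f v = ∑' u : {u : V // parent u = v}, w (u : V) * f (u : V)) (u : V) (c : 𝕜) :
    T (spike u c) = spike (parent u) (w u * c) := by
  ext v
  rw [hT]
  by_cases h : parent u = v
  · subst h
    rw [spike_same, tsum_eq_single (⟨u, rfl⟩ : {x : V // parent x = parent u}), spike_same]
    rintro ⟨x, hx⟩ hne
    rw [spike_of_ne (fun h => hne (Subtype.ext h)), mul_zero]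
  · rw [spike_of_ne (fun h' => h h'.symm)]
    convert tsum_zero with x
    rw [spike_of_ne, mul_zero]
    rintro hx
    exact h (hx ▸ x.2)

theorem pow_shift_spike (hT : ∀ (f : ZeroAtInftyContinuousMap V 𝕜) (v : V),
      T f v = ∑' u : {u : V // parent u = v}, w (u : V) * f (u : V)) (l : ℕ) (u : V) (c : 𝕜) :
    (T ^ l) (spike u c) = spike (parent^[l] u) (pathWeight parent w l u * c) := by
  induction l with
  | zero => simp [pathWeight]
  | succ l ih =>
    rw [pow_succ', mul_apply_eq_comp, ih, shift_spike hT, pathWeight_succ, iterate_succ_apply']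
    congr 1
    ring

/-- The coordinate functional of `T^l` at `v` has `ℓ¹`-norm at most `genWeight parent w l v`. -/
theorem enorm_pow_shift_apply_le (hT : ∀ (f : ZeroAtInftyContinuousMap V 𝕜) (v : V),
      T f v = ∑' u : {u : V // parent u = v}, w (u : V) * f (u : V)) (l : ℕ)
    (f : ZeroAtInftyContinuousMap V 𝕜) (v : V) :
    ‖(T ^ l) f v‖ₑ ≤ genWeight parent w l v * ENNReal.ofReal ‖f‖ := by
  induction l generalizing v with
  | zero =>
    rw [genWeight_zero, one_mul, ← ofReal_norm]
    exact ENNReal.ofReal_le_ofReal (norm_apply_le f v)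
  | succ l ih =>
    rw [pow_succ', mul_apply_eq_comp, hT, genWeight_succ, ← ENNReal.tsum_mul_right]
    refine enorm_tsum_le_tsum_enorm.trans (ENNReal.tsum_le_tsum fun c => ?_)
    rw [enorm_mul, mul_assoc]
    gcongr
    exact ih c

theorem enorm_perturbSum_apply_le (hT : ∀ (f : ZeroAtInftyContinuousMap V 𝕜) (v : V),
      T f v = ∑' u : {u : V // parent u = v}, w (u : V) * f (u : V)) {δ : ℝ} {n : ℕ}
    {f : ZeroAtInftyContinuousMap V 𝕜} (hf : PerturbSum T δ n f) (v : V) :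
    ‖f v‖ₑ ≤ cumWeight parent w n v * ENNReal.ofReal δ := by
  obtain ⟨e, he, rfl⟩ := hf
  rw [c0_sum_apply, cumWeight, Finset.sum_mul]
  refine (enorm_sum_le _ _).trans (Finset.sum_le_sum fun l _ => ?_)
  refine (enorm_pow_shift_apply_le hT l (e l) v).trans ?_
  gcongr
  exact (he l).le

/-- Every `c` with `|c| < δ * cumWeight` can be built up at `v` from errors of size `< δ`: the error
whose `l`-th image is used lives on finitely many vertices of the `l`-th generation below `v`, with
constant modulus there and phases chosen so that all contributions at `v` add up. -/
theorem perturbSum_spike (hT : ∀ (f : ZeroAtInftyContinuousMap V 𝕜) (v : V),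
      T f v = ∑' u : {u : V // parent u = v}, w (u : V) * f (u : V)) (hw : ∀ v, w v ≠ 0)
    {δ : ℝ} (hδ : 0 < δ) {n : ℕ} {v : V} {c : 𝕜}
    (h : ENNReal.ofReal (‖c‖ / δ) < cumWeight parent w n v) :
    PerturbSum T δ n (spike v c) := by
  classical
  obtain ⟨F, hF⟩ := exists_finset_of_lt_cumWeight parent w n v _ h
  set M : ℝ := ∑ l ∈ Finset.range n, ∑ u ∈ F,
      {u | parent^[l] u = v}.indicator (fun u => ‖pathWeight parent w l u‖) u with hM
  have hM0 : 0 < M := (by positivity : 0 ≤ ‖c‖ / δ).trans_lt hF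
  have hcM : ‖c‖ / M < δ := by
    rw [div_lt_iff₀ hδ] at hF
    rw [div_lt_iff₀ hM0]
    linarith
  -- `a l u * pathWeight l u = (c / M) * |pathWeight l u|` on the `l`-th generation
  let a : ℕ → V → 𝕜 := fun l u => if parent^[l] u = v then
    c / M * (‖pathWeight parent w l u‖ / pathWeight parent w l u) else 0
  have ha : ∀ l u, ‖a l u‖ ≤ ‖c‖ / M := by
    intro l u
    dsimp only [a]
    split_ifs
    · have : ‖pathWeight parent w l u‖ ≠ 0 := norm_ne_zero_iff.2 (pathWeight_ne_zero _ hw _ _)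
      simp [abs_of_pos hM0, div_self this]
    · simp only [norm_zero]
      positivity
  refine ⟨fun l => ∑ u ∈ F, spike u (a l u), fun l => lt_of_le_of_lt
    (norm_le_of_forall (by positivity) fun x => ?_) hcM, ?_⟩
  · rw [sum_spike_apply]
    split_ifs
    · exact ha l x
    · simp only [norm_zero]
      positivity
  · have key : ∀ l u, (T ^ l) (spike u (a l u)) = spike v (c / M *
        (({u | parent^[l] u = v}.indicator (fun u => ‖pathWeight parent w l u‖) u : ℝ) : 𝕜)) := by
      intro l u
      rw [pow_shift_spike hT]
      by_cases hu : parent^[l] u = v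
      · have := pathWeight_ne_zero parent hw l u
        simp only [a, hu, if_true, Set.indicator, Set.mem_ofPred_eq]
        congr 1
        field_simp
      · simp only [a, hu, if_false, Set.indicator, Set.mem_ofPred_eq, mul_zero, map_zero, spike_zero]
    simp_rw [map_sum, key, ← spike_sum, ← Finset.mul_sum]
    congr 1
    have hMs : (M : 𝕜) = ∑ l ∈ Finset.range n, ∑ u ∈ F,
        (({u | parent^[l] u = v}.indicator (fun u => ‖pathWeight parent w l u‖) u : ℝ) : 𝕜) := by
      rw [hM]
      push_cast
      rfl
    rw [← hMs, div_mul_cancel₀]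
    exact_mod_cast hM0.ne'

end Shift

/-! ### The characterization -/

/-- Characterization of chain recurrence of a weighted backward shift on `c₀(V)` over an
unrooted leafless directed tree; `c₀(V)` is realized as the space of functions vanishing
at infinity on the discrete space `V`. -/
theorem stmt7 {V : Type*} [Countable V] [TopologicalSpace V] [DiscreteTopology V]
    {𝕜 : Type*} [RCLike 𝕜]
    (parent : V → V) (hsurj : Function.Surjective parent)
    (hacyc : ∀ (v : V) (n : ℕ), 1 ≤ n → parent^[n] v ≠ v)
    (hconn : ∀ u v : V, ∃ m k : ℕ, parent^[m] u = parent^[k] v)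
    (w : V → 𝕜) (hw : ∀ v : V, w v ≠ 0)
    (T : ZeroAtInftyContinuousMap V 𝕜 →L[𝕜] ZeroAtInftyContinuousMap V 𝕜)
    (hT : ∀ (f : ZeroAtInftyContinuousMap V 𝕜) (v : V),
      T f v = ∑' u : {u : V // parent u = v}, w (u : V) * f (u : V)) :
    ChainRecurrent (fun f => T f) ↔
      ∀ v : V,
        (∑' n : ℕ, ∑' u : {u : V // parent^[n + 1] u = v},
            (‖pathWeight parent w (n + 1) (u : V)‖₊ : ℝ≥0∞)) = ⊤ ∧
          Tendsto (fun n : ℕ => ∑ j ∈ Finset.range n,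
              ∑' u : {u : V // parent^[j] u = parent^[n] v},
                (‖pathWeight parent w j (u : V)‖₊ : ℝ≥0∞) /
                  (‖pathWeight parent w n v‖₊ : ℝ≥0∞))
            atTop (nhds ⊤) := by
  have h1 : ∀ v, (∑' n : ℕ, ∑' u : {u : V // parent^[n + 1] u = v},
      (‖pathWeight parent w (n + 1) (u : V)‖₊ : ℝ≥0∞)) = ∑' n, genWeight parent w (n + 1) v :=
    fun v => rfl
  have h2 : ∀ v, (fun n : ℕ => ∑ j ∈ Finset.range n,
      ∑' u : {u : V // parent^[j] u = parent^[n] v},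
        (‖pathWeight parent w j (u : V)‖₊ : ℝ≥0∞) / (‖pathWeight parent w n v‖₊ : ℝ≥0∞)) =
      fun n => cumWeight parent w n (parent^[n] v) / ‖pathWeight parent w n v‖ₑ := by
    intro v
    funext n
    simp_rw [div_eq_mul_inv, ENNReal.tsum_mul_right]
    rw [← Finset.sum_mul]
    rfl
  simp_rw [h1, h2]
  constructor
  · intro h v
    -- A chain from the unit vector at `v` back to itself, with errors below `1 / (N + 1)`.
    have hret : ∀ N : ℕ, ∃ n, 1 ≤ n ∧ PerturbSum T ((N : ℝ) + 1)⁻¹ n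
        (spike v 1 - spike (parent^[n] v) (pathWeight parent w n v)) := by
      intro N
      obtain ⟨n, hn, f, h0, hfn, hf⟩ := h (spike v 1) ((N : ℝ) + 1)⁻¹ (by positivity)
      have := perturbSum_of_chain T (by positivity) f n hf
      rw [h0, hfn, pow_shift_spike hT, mul_one] at this
      exact ⟨n, hn, this⟩
    have hinv : ∀ N : ℕ, ENNReal.ofReal ((N : ℝ) + 1)⁻¹ = ((N : ℝ≥0∞) + 1)⁻¹ := by
      intro N
      rw [ENNReal.ofReal_inv_of_pos (by positivity), ENNReal.ofReal_add (by positivity) zero_le_one]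
      simp
    constructor
    · refine ENNReal.eq_top_of_forall_nnreal_le fun r => ?_
      obtain ⟨N, hN⟩ := exists_nat_ge r
      obtain ⟨n, hn, hp⟩ := hret N
      have := enorm_perturbSum_apply_le hT hp v
      rw [ZeroAtInftyContinuousMap.sub_apply, spike_same, spike_of_ne (hacyc v n hn).symm, sub_zero,
        enorm_one, hinv, ← div_eq_mul_inv, ENNReal.le_div_iff_mul_le (by simp) (by simp),
        one_mul] at this
      have hle : cumWeight parent w n v ≤ ∑' k, genWeight parent w (k + 1) v + 1 := by
        refine (cumWeight_mono parent w v (Nat.le_succ n)).trans ?_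
        dsimp only
        rw [cumWeight, Finset.sum_range_succ', genWeight_zero]
        gcongr
        exact ENNReal.sum_le_tsum _
      have h3 := (ENNReal.add_le_add_iff_right ENNReal.one_ne_top).1 (this.trans hle)
      refine le_trans ?_ h3
      exact_mod_cast hN
    · refine ENNReal.tendsto_nhds_top fun N => ?_
      obtain ⟨n, hn, hp⟩ := hret (N + 1)
      have := enorm_perturbSum_apply_le hT hp (parent^[n] v)
      rw [ZeroAtInftyContinuousMap.sub_apply, spike_same, spike_of_ne (hacyc v n hn), zero_sub,
        enorm_neg, hinv, ← div_eq_mul_inv, ENNReal.le_div_iff_mul_le (by simp) (by simp)] at this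
      have h3 : (N : ℝ≥0∞) < cumWeight parent w n (parent^[n] v) / ‖pathWeight parent w n v‖ₑ := by
        refine lt_of_lt_of_le (b := ((N + 1 : ℕ) : ℝ≥0∞) + 1) ?_ ?_
        · exact_mod_cast (by omega : N < N + 1 + 1)
        · rw [ENNReal.le_div_iff_mul_le
            (Or.inl (enorm_ne_zero.2 (pathWeight_ne_zero parent hw n v))) (Or.inl enorm_ne_top),
            mul_comm]
          exact this
      filter_upwards [eventually_ge_atTop n] with m hm
      exact h3.trans_le (monotone_cumWeight_div parent hw v hm)
  · intro h
    have hspike : ∀ v (c : 𝕜), EventuallyReturns T (spike v c) := by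
      intro v c δ hδ
      obtain ⟨hi, hii⟩ := h v
      have hi' : Tendsto (fun n => cumWeight parent w n v) atTop (nhds ⊤) := by
        have := ENNReal.tendsto_nat_tsum fun n => genWeight parent w n v
        rwa [tsum_eq_zero_add' ENNReal.summable, hi, add_top] at this
      have hlt : ENNReal.ofReal (‖c‖ / (δ / 2)) < ⊤ := ENNReal.ofReal_lt_top
      filter_upwards [hi'.eventually (lt_mem_nhds hlt), hii.eventually (lt_mem_nhds hlt)]
        with m hm1 hm2
      have e1 := perturbSum_spike hT hw (half_pos hδ) hm1
      have e2 : PerturbSum T (δ / 2) m ((T ^ m) (spike v c)) := by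
        rw [pow_shift_spike hT]
        refine perturbSum_spike hT hw (half_pos hδ) ?_
        rw [ENNReal.lt_div_iff_mul_lt
          (Or.inl (enorm_ne_zero.2 (pathWeight_ne_zero parent hw m v))) (Or.inl enorm_ne_top)] at hm2
        convert hm2 using 1
        rw [← ofReal_norm, ← ENNReal.ofReal_mul (by positivity), norm_mul]
        congr 1
        ring
      have := e1.add e2.neg
      rwa [add_halves, ← sub_eq_add_neg] at this
    refine chainRecurrent_of_eventuallyReturns fun x => eventuallyReturns_of_approx fun ε hε => ?_
    obtain ⟨F, hF⟩ := exists_sum_spike_near x hε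
    exact ⟨_, hF, eventuallyReturns_sum F _ fun u _ => hspike u _⟩
end
end

section
/- Let (V, E) be a rooted leafless directed tree, let λ = (λ_v)_{v∈V} be nonzero real or complex weights, and suppose the weighted backward shift B_λ defines a bounded linear operator on X = ℓ1(V). Then B_λ is chain recurrent if and only if for every v ∈ V, ∑_{n=1}^∞ sup_{u ∈ Child^n(v)} |λ(v→u)| = ∞. -/
/-!
Write `c n = sup |λ(v → u)|` over `u ∈ Child^n(v)`. Since `T ^ n` sends `e_u` to `λ(v → u) e_v` for
such `u`, and the coordinate at `v` of `T ^ n e_u` is `0` for all other `u`, the functional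
`e ↦ (T ^ n e)(v)` on `ℓ¹` has norm `c n` (`norm_pow_apply_le`).

Here `c 0 = 1`, so including `n = 0` in `∑ c n` does not affect convergence. If `∑ c n < ∞`,
the errors of a `δ`-chain contribute at most `δ ∑ c n` to its value at `v`. A chain from `e_v`
to itself would then satisfy `1 ≤ δ ∑ c n`, because `(T ^ N e_v)(v) = 0` for `N ≥ 1`;
this is impossible for small `δ` (`not_chainRecurrent`).

Conversely, consider the pairs `(x, y)` joined, for every `δ > 0`, by chains of every sufficiently
large length. As `T` is linear, they form a closed linear subspace of `X × X` (`chainRel`,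
`isClosed_chainRel`). It contains `(e_v, 0)`, because `e_v` is killed by a power of `T`, and
`(0, e_v)`, because `∑ c n = ∞` allows errors of size at most `δ`, placed at well chosen
descendants of `v`, to add up to exactly `e_v` (`zero_single_mem_chainRel`). Hence it contains the
sum `(e_v, e_v)`, and by density of the span of the `e_v` the whole diagonal, which gives chain
recurrence.
-/

open Filter Function
open scoped ENNReal NNReal

noncomputable section

/-! ### Chains of prescribed length for a bounded operator -/

section Chains

variable {𝕜 E : Type*} [RCLike 𝕜] [NormedAddCommGroup E] [NormedSpace 𝕜 E]

/-- A chain of exactly `n` steps from `x` to `y` for `T`, each step having error at most `δ`. -/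
def ChainOfLength (T : E →L[𝕜] E) (δ : ℝ) (n : ℕ) (x y : E) : Prop :=
  ∃ f : ℕ → E, f 0 = x ∧ f n = y ∧ ∀ l < n, ‖T (f l) - f (l + 1)‖ ≤ δ

lemma ChainOfLength.add {T : E →L[𝕜] E} {δ δ' : ℝ} {n : ℕ} {x y x' y' : E}
    (h : ChainOfLength T δ n x y) (h' : ChainOfLength T δ' n x' y') :
    ChainOfLength T (δ + δ') n (x + x') (y + y') := by
  obtain ⟨f, rfl, rfl, hf⟩ := h
  obtain ⟨g, rfl, rfl, hg⟩ := h'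
  refine ⟨fun l => f l + g l, rfl, rfl, fun l hl => ?_⟩
  have e : T (f l + g l) - (f (l + 1) + g (l + 1)) =
      (T (f l) - f (l + 1)) + (T (g l) - g (l + 1)) := by
    rw [map_add]; abel
  rw [e]
  exact (norm_add_le _ _).trans (add_le_add (hf l hl) (hg l hl))

lemma ChainOfLength.smul {T : E →L[𝕜] E} {δ : ℝ} {n : ℕ} {x y : E}
    (h : ChainOfLength T δ n x y) (a : 𝕜) :
    ChainOfLength T (‖a‖ * δ) n (a • x) (a • y) := by
  obtain ⟨f, rfl, rfl, hf⟩ := h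
  refine ⟨fun l => a • f l, rfl, rfl, fun l hl => ?_⟩
  rw [map_smul, ← smul_sub, norm_smul]
  exact mul_le_mul_of_nonneg_left (hf l hl) (norm_nonneg a)

lemma ChainOfLength.mono {T : E →L[𝕜] E} {δ δ' : ℝ} {n : ℕ} {x y : E}
    (h : ChainOfLength T δ n x y) (hδ : δ ≤ δ') : ChainOfLength T δ' n x y := by
  obtain ⟨f, h0, hn, hf⟩ := h
  exact ⟨f, h0, hn, fun l hl => (hf l hl).trans hδ⟩

/-- Small endpoints are joined by the chain that vanishes strictly between them. -/
lemma chainOfLength_of_small (T : E →L[𝕜] E) {η : ℝ} {n : ℕ} (hn : 1 ≤ n) {x y : E}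
    (hx : ‖x‖ ≤ η) (hy : ‖y‖ ≤ η) : ChainOfLength T ((‖T‖ + 1) * η) n x y := by
  have hη : 0 ≤ η := (norm_nonneg x).trans hx
  refine ⟨fun l => if l = 0 then x else if l = n then y else 0, by simp,
    by simp [show n ≠ 0 by omega], fun l hl => ?_⟩
  have h1 : ‖T (if l = 0 then x else if l = n then y else 0)‖ ≤ ‖T‖ * η := by
    refine (T.le_opNorm _).trans (mul_le_mul_of_nonneg_left ?_ (norm_nonneg _))
    split_ifs
    · exact hx
    · exact hy
    · simpa using hη
  have h2 : ‖(if l + 1 = 0 then x else if l + 1 = n then y else 0)‖ ≤ η := by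
    rw [if_neg l.succ_ne_zero]
    split_ifs
    · exact hy
    · simpa using hη
  calc _ ≤ _ := norm_sub_le _ _
    _ ≤ ‖T‖ * η + η := add_le_add h1 h2
    _ = _ := by ring

/-- The errors of a chain starting at `0` accumulate along the orbits of `T`. -/
lemma chainOfLength_zero_sum (T : E →L[𝕜] E) {δ : ℝ} {n : ℕ} {d : ℕ → E}
    (hd : ∀ m, m < n → ‖d m‖ ≤ δ) :
    ChainOfLength T δ n 0 (∑ m ∈ Finset.range n, (T ^ m) (d m)) := by
  refine ⟨fun l => ∑ m ∈ Finset.range l, (T ^ m) (d (n - l + m)), by simp, by simp,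
    fun l hl => ?_⟩
  have e : T (∑ m ∈ Finset.range l, (T ^ m) (d (n - l + m))) -
      ∑ m ∈ Finset.range (l + 1), (T ^ m) (d (n - (l + 1) + m)) = - d (n - (l + 1)) := by
    rw [Finset.sum_range_succ', map_sum]
    have : ∀ m ∈ Finset.range l, T ((T ^ m) (d (n - l + m))) =
        (T ^ (m + 1)) (d (n - (l + 1) + (m + 1))) := by
      intro m _
      rw [pow_succ', show n - (l + 1) + (m + 1) = n - l + m by omega]
      rfl
    rw [Finset.sum_congr rfl this]
    simp
  rw [e, norm_neg]
  exact hd _ (by omega)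

/-- The pairs `(x, y)` such that, for every `δ > 0`, all sufficiently large `n` admit a chain of
exactly `n` steps from `x` to `y`. Prescribing the length is what makes this a linear subspace. -/
def chainRel (T : E →L[𝕜] E) : Submodule 𝕜 (E × E) where
  carrier := {p | ∀ δ : ℝ, 0 < δ → ∃ N, ∀ n ≥ N, ChainOfLength T δ n p.1 p.2}
  zero_mem' := fun δ hδ => ⟨0, fun n _ => ⟨fun _ => 0, rfl, rfl, by simp [hδ.le]⟩⟩
  add_mem' := by
    intro p q hp hq δ hδ
    obtain ⟨N, hN⟩ := hp (δ / 2) (half_pos hδ)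
    obtain ⟨M, hM⟩ := hq (δ / 2) (half_pos hδ)
    refine ⟨max N M, fun n hn => ?_⟩
    exact ((hN n (le_of_max_le_left hn)).add (hM n (le_of_max_le_right hn))).mono
      (add_halves δ).le
  smul_mem' := by
    intro a p hp δ hδ
    have ha : 0 < ‖a‖ + 1 := by positivity
    obtain ⟨N, hN⟩ := hp (δ / (‖a‖ + 1)) (by positivity)
    refine ⟨N, fun n hn => ((hN n hn).smul a).mono ?_⟩
    rw [← mul_div_assoc, div_le_iff₀ ha]
    nlinarith [norm_nonneg a]

lemma isClosed_chainRel (T : E →L[𝕜] E) : IsClosed (chainRel T : Set (E × E)) := by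
  refine isClosed_of_closure_subset fun p hp δ hδ => ?_
  have hT : 0 < ‖T‖ + 1 := by positivity
  obtain ⟨q, hq, hpq⟩ := Metric.mem_closure_iff.1 hp (δ / 2 / (‖T‖ + 1)) (by positivity)
  obtain ⟨N, hN⟩ := hq (δ / 2) (half_pos hδ)
  rw [dist_eq_norm] at hpq
  refine ⟨max N 1, fun n hn => ?_⟩
  have h := (hN n (le_of_max_le_left hn)).add
    (chainOfLength_of_small T (le_of_max_le_right hn)
      ((norm_fst_le (p - q)).trans hpq.le) ((norm_snd_le (p - q)).trans hpq.le))
  rw [mul_div_cancel₀ _ hT.ne', add_halves] at h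
  simpa using h

/-- A vector with finite orbit is joined to `0` by its orbit. -/
lemma mem_chainRel_of_pow_eq_zero {T : E →L[𝕜] E} {x : E} {k : ℕ} (hk : (T ^ k) x = 0) :
    (x, (0 : E)) ∈ chainRel T := by
  intro δ hδ
  refine ⟨k, fun n hn => ⟨fun l => (T ^ l) x, by simp, ?_, fun l _ => ?_⟩⟩
  · change (T ^ n) x = 0
    rw [← Nat.sub_add_cancel hn, pow_add, mul_apply_eq_comp, hk, map_zero]
  · simp [pow_succ', hδ.le]

lemma chainRecurrent_of_chainRel {T : E →L[𝕜] E} (h : ∀ x, (x, x) ∈ chainRel T) :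
    ChainRecurrent (fun x => T x) := by
  intro x δ hδ
  obtain ⟨N, hN⟩ := h x (δ / 2) (half_pos hδ)
  obtain ⟨f, h0, hn, hf⟩ := hN (N + 1) (by omega)
  refine ⟨N + 1, by omega, f, h0, hn, fun l hl hl' => ?_⟩
  have := hf (l - 1) (by omega)
  rw [Nat.sub_add_cancel hl] at this
  rw [dist_eq_norm]
  linarith

end Chains

/-! ### The weighted shift on the tree -/

section Tree

variable {V : Type*} {𝕜 : Type*} [RCLike 𝕜]

/-- `T ^ n (a e_u) = λ(v → u) a e_v` if `u ∈ Child^n(v)`, and `T ^ n e_u = 0` if `n > depth u`;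
both are encoded coordinatewise. -/
lemma pow_apply_single_apply [DecidableEq V] {root : V} {parent : V → V} {depth : V → ℕ}
    (hdepth0 : depth root = 0)
    (hdepth : ∀ v : V, v ≠ root → depth v = depth (parent v) + 1) {w : V → 𝕜}
    {T : lp (fun _ : V => 𝕜) 1 →L[𝕜] lp (fun _ : V => 𝕜) 1}
    (hT : ∀ (f : lp (fun _ : V => 𝕜) 1) (v : V),
      T f v = ∑' u : {u : V // parent u = v ∧ depth u = depth v + 1}, w (u : V) * f (u : V))
    (n : ℕ) (u v : V) (a : 𝕜) :
    (T ^ n) (lp.single 1 u a) v =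
      if parent^[n] u = v ∧ depth u = depth v + n then pathWeight parent w n u * a else 0 := by
  induction n generalizing u a with
  | zero =>
    by_cases h : u = v
    · subst h; simp [pathWeight]
    · simp [h, Ne.symm h]
  | succ n ih =>
    rw [pow_succ, mul_apply_eq_comp]
    by_cases hu : u = root
    · have h0 : T (lp.single 1 u a) = 0 := by
        ext v'
        rw [hT]
        have : ∀ x : {x : V // parent x = v' ∧ depth x = depth v' + 1},
            w (x : V) * (lp.single 1 u a : lp (fun _ : V => 𝕜) 1) (x : V) = 0 := by
          rintro ⟨x, hx, hx'⟩
          have : x ≠ u := by rintro rfl; rw [hu, hdepth0] at hx'; omega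
          rw [lp.single_apply_ne _ _ _ this, mul_zero]
        simp only [this, tsum_zero]
        rfl
      rw [h0, map_zero, if_neg]
      · rfl
      · rintro ⟨-, h⟩
        rw [hu, hdepth0] at h
        omega
    · have h1 : T (lp.single 1 u a) = lp.single 1 (parent u) (w u * a) := by
        ext v'
        rw [hT]
        by_cases hv : v' = parent u
        · subst hv
          rw [tsum_eq_single ⟨u, rfl, hdepth u hu⟩]
          · simp
          · rintro ⟨x, hx, hx'⟩ hne
            have : x ≠ u := fun h => hne (Subtype.ext h)
            rw [lp.single_apply_ne _ _ _ this, mul_zero]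
        · rw [lp.single_apply_ne _ _ _ hv]
          have : ∀ x : {x : V // parent x = v' ∧ depth x = depth v' + 1},
              w (x : V) * (lp.single 1 u a : lp (fun _ : V => 𝕜) 1) (x : V) = 0 := by
            rintro ⟨x, hx, hx'⟩
            have : x ≠ u := by rintro rfl; exact hv hx.symm
            rw [lp.single_apply_ne _ _ _ this, mul_zero]
          simp only [this, tsum_zero]
      have hp : pathWeight parent w (n + 1) u = pathWeight parent w n (parent u) * w u := by
        simp [pathWeight, Finset.prod_range_succ', Function.iterate_succ_apply]
      rw [h1, ih, hp, Function.iterate_succ_apply, hdepth u hu, mul_assoc]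
      congr 1
      rw [← add_assoc, add_left_inj]

/-- In `ℓ¹` it suffices to bound the functional `e ↦ (T ^ n e)(v)` on the vectors `e_u`. -/
lemma norm_pow_apply_le {root : V} {parent : V → V} {depth : V → ℕ}
    (hdepth0 : depth root = 0)
    (hdepth : ∀ v : V, v ≠ root → depth v = depth (parent v) + 1) {w : V → 𝕜}
    {T : lp (fun _ : V => 𝕜) 1 →L[𝕜] lp (fun _ : V => 𝕜) 1}
    (hT : ∀ (f : lp (fun _ : V => 𝕜) 1) (v : V),
      T f v = ∑' u : {u : V // parent u = v ∧ depth u = depth v + 1}, w (u : V) * f (u : V))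
    (n : ℕ) (v : V) {c : ℝ} (hc0 : 0 ≤ c)
    (hc : ∀ u, parent^[n] u = v → depth u = depth v + n → ‖pathWeight parent w n u‖ ≤ c)
    (e : lp (fun _ : V => 𝕜) 1) : ‖(T ^ n) e v‖ ≤ c * ‖e‖ := by
  classical
  have hs := (lp.hasSum_single ENNReal.one_ne_top e).mapL
    ((lp.evalCLM 𝕜 (fun _ : V => 𝕜) 1 v).comp (T ^ n))
  have hn : HasSum (fun i => ‖e i‖) ‖e‖ := by
    simpa using lp.hasSum_norm (by simp) e
  have h := tsum_of_norm_bounded (hn.mul_left c) (f := fun i => (T ^ n) (lp.single 1 i (e i)) v) ?_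
  · rwa [show ∑' i, (T ^ n) (lp.single 1 i (e i)) v = (T ^ n) e v from hs.tsum_eq] at h
  · intro i
    rw [pow_apply_single_apply hdepth0 hdepth hT]
    split_ifs with hi
    · rw [norm_mul]
      exact mul_le_mul_of_nonneg_right (hc i hi.1 hi.2) (norm_nonneg _)
    · rw [norm_zero]; positivity

/-- Summable suprema at `v` bound the contribution of all errors of a chain at `v` by a multiple
of `δ`, while `T ^ N e_v` vanishes at `v` for `N ≥ 1`; so no fine chain returns to `e_v`. -/
lemma not_chainRecurrent {root : V} {parent : V → V} {depth : V → ℕ}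
    (hdepth0 : depth root = 0)
    (hdepth : ∀ v : V, v ≠ root → depth v = depth (parent v) + 1) {w : V → 𝕜}
    {T : lp (fun _ : V => 𝕜) 1 →L[𝕜] lp (fun _ : V => 𝕜) 1}
    (hT : ∀ (f : lp (fun _ : V => 𝕜) 1) (v : V),
      T f v = ∑' u : {u : V // parent u = v ∧ depth u = depth v + 1}, w (u : V) * f (u : V))
    (v : V) {c : ℕ → ℝ} (hc0 : ∀ n, 0 ≤ c n) (hcs : Summable c)
    (hc : ∀ n u, parent^[n] u = v → depth u = depth v + n → ‖pathWeight parent w n u‖ ≤ c n) :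
    ¬ ChainRecurrent (fun f => T f) := by
  classical
  intro hrec
  have hS : 0 ≤ ∑' n, c n := tsum_nonneg hc0
  set δ : ℝ := 1 / (2 * (∑' n, c n + 1)) with hδ
  have hδ0 : 0 < δ := by positivity
  obtain ⟨N, hN, f, h0, hfN, hf⟩ := hrec (lp.single 1 v 1) δ hδ0
  have key : ∀ l, l ≤ N → ∀ n, ‖(T ^ n) (f l) v‖ ≤
      ‖(T ^ (n + l)) (f 0) v‖ + δ * ∑ k ∈ Finset.range l, c (n + k) := by
    intro l
    induction l with
    | zero => intro _ n; simp
    | succ l ih =>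
      intro hl n
      have hstep : ‖f (l + 1) - T (f l)‖ ≤ δ := by
        have := hf (l + 1) (by omega) hl
        rw [Nat.add_sub_cancel, dist_comm, dist_eq_norm] at this
        exact this.le
      have e : (T ^ n) (f (l + 1)) v =
          (T ^ (n + 1)) (f l) v + (T ^ n) (f (l + 1) - T (f l)) v := by
        rw [map_sub, pow_succ, mul_apply_eq_comp, lp.coeFn_sub, Pi.sub_apply]
        ring
      have h1 := ih (by omega) (n + 1)
      have h2 := norm_pow_apply_le hdepth0 hdepth hT n v (hc0 n) (hc n) (f (l + 1) - T (f l))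
      have h3 : c n * ‖f (l + 1) - T (f l)‖ ≤ c n * δ :=
        mul_le_mul_of_nonneg_left hstep (hc0 n)
      have h4 : ∑ k ∈ Finset.range (l + 1), c (n + k) =
          ∑ k ∈ Finset.range l, c (n + 1 + k) + c n := by
        rw [Finset.sum_range_succ']
        simp only [add_zero, add_assoc, add_comm 1]
      rw [e, h4, show n + (l + 1) = n + 1 + l by omega]
      refine (norm_add_le _ _).trans ?_
      linarith
  have h := key N le_rfl 0
  rw [hfN, h0, pow_apply_single_apply hdepth0 hdepth hT, pow_apply_single_apply hdepth0 hdepth hT,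
    if_pos (by simp), if_neg (by omega)] at h
  simp only [zero_add, pathWeight, Finset.range_zero, Finset.prod_empty, mul_one, norm_one,
    norm_zero] at h
  have h5 : δ * ∑ k ∈ Finset.range N, c k ≤ δ * ∑' n, c n :=
    mul_le_mul_of_nonneg_left (hcs.sum_le_tsum _ fun i _ => hc0 i) hδ0.le
  have h6 : δ * (2 * (∑' n, c n + 1)) = 1 := by
    rw [hδ]; field_simp
  nlinarith

/-- A divergent choice of paths below `v` lets errors injected at the vertices `u m`, rotated to
have the same phase once transported to `v`, accumulate exactly to `e_v`. -/
lemma zero_single_mem_chainRel {root : V} {parent : V → V} {depth : V → ℕ} [DecidableEq V]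
    (hdepth0 : depth root = 0)
    (hdepth : ∀ v : V, v ≠ root → depth v = depth (parent v) + 1) {w : V → 𝕜}
    (hw : ∀ v : V, w v ≠ 0)
    {T : lp (fun _ : V => 𝕜) 1 →L[𝕜] lp (fun _ : V => 𝕜) 1}
    (hT : ∀ (f : lp (fun _ : V => 𝕜) 1) (v : V),
      T f v = ∑' u : {u : V // parent u = v ∧ depth u = depth v + 1}, w (u : V) * f (u : V))
    (v : V) {u : ℕ → V} (hu : ∀ n, parent^[n] (u n) = v ∧ depth (u n) = depth v + n)
    (hsum : ¬ Summable fun n => ‖pathWeight parent w n (u n)‖) :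
    ((0 : lp (fun _ : V => 𝕜) 1), (lp.single 1 v 1 : lp (fun _ : V => 𝕜) 1)) ∈ chainRel T := by
  intro δ hδ
  rw [not_summable_iff_tendsto_nat_atTop_of_nonneg fun n => norm_nonneg _] at hsum
  obtain ⟨N, hN⟩ := eventually_atTop.1 (hsum.eventually_ge_atTop (1 / δ))
  refine ⟨N, fun n hn => ?_⟩
  set p : ℕ → 𝕜 := fun m => pathWeight parent w m (u m) with hp
  have hp0 : ∀ m, p m ≠ 0 := fun m => Finset.prod_ne_zero_iff.2 fun i _ => hw _
  set s : ℝ := ∑ m ∈ Finset.range n, ‖p m‖ with hs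
  have hsδ : 1 / δ ≤ s := hN n hn
  have hs0 : 0 < s := (by positivity : 0 < 1 / δ).trans_le hsδ
  -- `a m * p m = ‖p m‖ / s`, so that these products add up to `1`
  set a : ℕ → 𝕜 := fun m => (p m)⁻¹ * ((‖p m‖ / s : ℝ) : 𝕜) with ha
  have hpa : ∀ m, p m * a m = ((‖p m‖ / s : ℝ) : 𝕜) := fun m => by
    rw [ha]; exact mul_inv_cancel_left₀ (hp0 m) _
  have hna : ∀ m, ‖a m‖ ≤ δ := fun m => by
    have h0 : ‖p m‖ ≠ 0 := norm_ne_zero_iff.2 (hp0 m)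
    have : ‖a m‖ = 1 / s := by
      rw [ha, norm_mul, norm_inv, RCLike.norm_ofReal, abs_of_nonneg (by positivity)]
      field_simp
    rw [this]
    exact (one_div_le hs0 hδ).2 hsδ
  have hTd : ∀ m, (T ^ m) (lp.single 1 (u m) (a m)) = lp.single 1 v (p m * a m) := by
    intro m
    ext v'
    rw [pow_apply_single_apply hdepth0 hdepth hT]
    by_cases hv : v' = v
    · subst hv
      rw [if_pos (hu m), lp.single_apply_self]
    · rw [if_neg fun h => hv (h.1.symm.trans (hu m).1), lp.single_apply_ne _ _ _ hv]
  have h := chainOfLength_zero_sum T (δ := δ) (n := n)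
    (d := fun m => (lp.single 1 (u m) (a m) : lp (fun _ : V => 𝕜) 1))
    fun m _ => by rw [lp.norm_single one_pos]; exact hna m
  convert h using 1
  have h1 : ∑ m ∈ Finset.range n, p m * a m = 1 := by
    simp only [hpa]
    rw [← RCLike.ofReal_sum, ← Finset.sum_div, div_self hs0.ne', RCLike.ofReal_one]
  simp only [hTd]
  rw [← h1]
  exact map_sum (lp.singleAddMonoidHom (E := fun _ : V => 𝕜) 1 v) _ _

end Tree

/-! ### The characterization -/

/-- Characterization of chain recurrence of a weighted backward shift on `ℓ¹(V)` over a
rooted leafless directed tree.  The rooted tree is modeled by a total parent map fixing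
the root together with a depth function; `Child^n(v)` is the set of `u` with
`parent^[n] u = v` and `depth u = depth v + n`. -/
theorem stmt8 {V : Type*} [Countable V] {𝕜 : Type*} [RCLike 𝕜]
    (root : V) (parent : V → V) (depth : V → ℕ)
    (hroot : parent root = root) (hdepth0 : depth root = 0)
    (hdepth : ∀ v : V, v ≠ root → depth v = depth (parent v) + 1)
    (hleafless : ∀ v : V, ∃ u : V, parent u = v ∧ depth u = depth v + 1)
    (w : V → 𝕜) (hw : ∀ v : V, w v ≠ 0)
    (T : lp (fun _ : V => 𝕜) 1 →L[𝕜] lp (fun _ : V => 𝕜) 1)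
    (hT : ∀ (f : lp (fun _ : V => 𝕜) 1) (v : V),
      T f v = ∑' u : {u : V // parent u = v ∧ depth u = depth v + 1}, w (u : V) * f (u : V)) :
    ChainRecurrent (fun f => T f) ↔
      ∀ v : V,
        (∑' n : ℕ, ⨆ u : {u : V // parent^[n + 1] u = v ∧ depth u = depth v + (n + 1)},
            (‖pathWeight parent w (n + 1) (u : V)‖₊ : ℝ≥0∞)) = ⊤ := by
  classical
  set c : V → ℕ → ℝ≥0∞ := fun v n => ⨆ u : {u : V // parent^[n] u = v ∧ depth u = depth v + n},
    (‖pathWeight parent w n (u : V)‖₊ : ℝ≥0∞) with hcdef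
  have hbound : ∀ n u v, parent^[n] u = v → depth u = depth v + n →
      ‖pathWeight parent w n u‖ ≤ ‖T ^ n‖ := by
    intro n u v h1 h2
    have h := (lp.norm_apply_le_norm one_ne_zero ((T ^ n) (lp.single 1 u 1)) v).trans
      ((T ^ n).le_opNorm _)
    rwa [pow_apply_single_apply hdepth0 hdepth hT, if_pos ⟨h1, h2⟩, lp.norm_single one_pos,
      norm_one, mul_one, mul_one] at h
  have hcfin : ∀ v n, c v n ≠ ⊤ := by
    intro v n
    refine ne_top_of_le_ne_top (ENNReal.coe_ne_top (r := ‖T ^ n‖₊)) (iSup_le ?_)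
    rintro ⟨u, h1, h2⟩
    exact_mod_cast hbound n u v h1 h2
  constructor
  · intro hrec v
    by_contra hne
    have hs : Summable fun n => (c v n).toReal :=
      (summable_nat_add_iff 1).1 (ENNReal.summable_toReal hne)
    refine not_chainRecurrent hdepth0 hdepth hT v (fun n => ENNReal.toReal_nonneg) hs ?_ hrec
    intro n u h1 h2
    have h : (‖pathWeight parent w n u‖₊ : ℝ≥0∞) ≤ c v n :=
      le_iSup (fun u : {u : V // parent^[n] u = v ∧ depth u = depth v + n} =>
        (‖pathWeight parent w n (u : V)‖₊ : ℝ≥0∞)) ⟨u, h1, h2⟩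
    simpa using ENNReal.toReal_mono (hcfin v n) h
  · intro hdiv
    have hchild : ∀ n v, ∃ u, parent^[n] u = v ∧ depth u = depth v + n := by
      intro n
      induction n with
      | zero => exact fun v => ⟨v, rfl, rfl⟩
      | succ n ih =>
        intro v
        obtain ⟨x, hx, hx'⟩ := ih v
        obtain ⟨u, hu, hu'⟩ := hleafless x
        exact ⟨u, by rw [Function.iterate_succ_apply, hu, hx], by omega⟩
    have hzero : ∀ v, ((0 : lp (fun _ : V => 𝕜) 1),
        (lp.single 1 v 1 : lp (fun _ : V => 𝕜) 1)) ∈ chainRel T := by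
      intro v
      have hex : ∀ n, ∃ u, (parent^[n] u = v ∧ depth u = depth v + n) ∧
          c v n ≤ 2 * (‖pathWeight parent w n u‖₊ : ℝ≥0∞) := by
        intro n
        have hpos : c v n ≠ 0 := by
          obtain ⟨u, hu⟩ := hchild n v
          have h : (‖pathWeight parent w n u‖₊ : ℝ≥0∞) ≤ c v n :=
            le_iSup (fun u : {u : V // parent^[n] u = v ∧ depth u = depth v + n} =>
              (‖pathWeight parent w n (u : V)‖₊ : ℝ≥0∞)) ⟨u, hu⟩
          refine (lt_of_lt_of_le ?_ h).ne'
          have : pathWeight parent w n u ≠ 0 := Finset.prod_ne_zero_iff.2 fun i _ => hw _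
          simpa [pos_iff_ne_zero] using this
        obtain ⟨⟨u, hu⟩, h⟩ := lt_iSup_iff.1 (ENNReal.half_lt_self hpos (hcfin v n))
        refine ⟨u, hu, ?_⟩
        rw [mul_comm]
        exact (ENNReal.div_le_iff (by simp) (by simp)).1 h.le
      choose u hu hcu using hex
      refine zero_single_mem_chainRel hdepth0 hdepth hw hT v hu fun hs => ?_
      have hs1 : Summable fun n => ‖pathWeight parent w (n + 1) (u (n + 1))‖ :=
        (summable_nat_add_iff (f := fun n => ‖pathWeight parent w n (u n)‖) 1).2 hs
      have hs' : ∑' n, (‖pathWeight parent w (n + 1) (u (n + 1))‖₊ : ℝ≥0∞) ≠ ⊤ := by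
        rw [ENNReal.tsum_coe_ne_top_iff_summable_coe]
        exact hs1
      have hle : ∑' n, c v (n + 1) ≤
          2 * ∑' n, (‖pathWeight parent w (n + 1) (u (n + 1))‖₊ : ℝ≥0∞) := by
        rw [← ENNReal.tsum_mul_left]
        exact ENNReal.tsum_le_tsum fun n => hcu (n + 1)
      exact ne_top_of_le_ne_top (ENNReal.mul_ne_top (by simp) hs') hle (hdiv v)
    -- `e_v` is killed by `T ^ (depth v + 1)`
    have hnil : ∀ v, ((lp.single 1 v 1 : lp (fun _ : V => 𝕜) 1),
        (0 : lp (fun _ : V => 𝕜) 1)) ∈ chainRel T := by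
      intro v
      refine mem_chainRel_of_pow_eq_zero (k := depth v + 1) ?_
      ext v'
      rw [pow_apply_single_apply hdepth0 hdepth hT, if_neg (by omega)]
      rfl
    have hdiag : ∀ v (a : 𝕜), ((lp.single 1 v a : lp (fun _ : V => 𝕜) 1),
        (lp.single 1 v a : lp (fun _ : V => 𝕜) 1)) ∈ chainRel T := by
      intro v a
      have h := (chainRel T).smul_mem a ((chainRel T).add_mem (hzero v) (hnil v))
      simpa [← lp.single_smul] using h
    refine chainRecurrent_of_chainRel fun x => ?_
    have hx := lp.hasSum_single ENNReal.one_ne_top x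
    exact (isClosed_chainRel T).mem_of_tendsto (hx.prodMk hx)
      (Eventually.of_forall fun s => (chainRel T).sum_mem fun v _ => hdiag v (x v))
end
end
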